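/- Let h : [0, 1/π] → [0, 1] be the inverse function of g. There exist constants 0 < c < C such that for every y ∈ (0, 1/π] and every j ∈ {1, 2, 3}, c · y^{2/3 − j} ≤ | h^{(j)}(y) | ≤ C · y^{2/3 − j}, where h^{(j)} denotes the j-th derivative of h. -/

import Mathlib

open Real Set

/-- The function `g(t) = (√(1-t²) - t arccos t)/π`. -/
noncomputable def gfun (t : ℝ) : ℝ := (Real.sqrt (1 - t ^ 2) - t * Real.arccos t) / π

/-- cubic bounds for `sin x - x cos x` -/
lemma aux_lower {x : ℝ} (h0 : 0 ≤ x) (h1 : x ≤ π / 2) :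
    2 / (3 * π) * x ^ 3 ≤ sin x - x * cos x := by
  have hd : ∀ z : ℝ, HasDerivAt (fun z : ℝ => sin z - z * cos z - 2 / (3 * π) * z ^ 3)
      (z * (sin z - 2 / π * z)) z := by
    intro z
    have := (((hasDerivAt_sin z).sub ((hasDerivAt_id z).mul (hasDerivAt_cos z))).sub
      ((hasDerivAt_pow 3 z).const_mul (2 / (3 * π))))
    refine this.congr_deriv ?_
    have := pi_ne_zero
    simp
    field_simp
  have hm : MonotoneOn (fun z : ℝ => sin z - z * cos z - 2 / (3 * π) * z ^ 3) (Icc 0 (π / 2)) := by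
    apply monotoneOn_of_deriv_nonneg (convex_Icc _ _)
    · exact fun z _ => (hd z).continuousAt.continuousWithinAt
    · exact fun z _ => (hd z).differentiableAt.differentiableWithinAt
    · intro z hz
      rw [interior_Icc] at hz
      rw [(hd z).deriv]
      have := mul_le_sin hz.1.le hz.2.le
      exact mul_nonneg hz.1.le (by linarith)
  have := hm (left_mem_Icc.2 (h0.trans h1)) ⟨h0, h1⟩ h0
  simp at this
  linarith

lemma aux_upper {x : ℝ} (h0 : 0 ≤ x) : sin x - x * cos x ≤ 1 / 3 * x ^ 3 := by
  have hd : ∀ z : ℝ, HasDerivAt (fun z : ℝ => 1 / 3 * z ^ 3 - (sin z - z * cos z))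
      (z * (z - sin z)) z := by
    intro z
    have := ((hasDerivAt_pow 3 z).const_mul (1 / 3 : ℝ)).sub
      ((hasDerivAt_sin z).sub ((hasDerivAt_id z).mul (hasDerivAt_cos z)))
    refine this.congr_deriv ?_
    simp
    ring
  have hm : MonotoneOn (fun z : ℝ => 1 / 3 * z ^ 3 - (sin z - z * cos z)) (Ici 0) := by
    apply monotoneOn_of_deriv_nonneg (convex_Ici _)
    · exact fun z _ => (hd z).continuousAt.continuousWithinAt
    · exact fun z _ => (hd z).differentiableAt.differentiableWithinAt
    · intro z hz
      rw [interior_Ici] at hz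
      have hz : 0 < z := hz
      rw [(hd z).deriv]
      have := sin_le hz.le
      exact mul_nonneg hz.le (by linarith)
  have := hm (show (0:ℝ) ∈ Ici 0 from mem_Ici.2 le_rfl) (show x ∈ Ici 0 from h0) h0
  simp at this
  linarith

lemma gfun_eq {t : ℝ} (ht : t ∈ Icc (0:ℝ) 1) :
    gfun t = (sin (arccos t) - arccos t * cos (arccos t)) / π := by
  rw [gfun, sin_arccos, cos_arccos (by linarith [ht.1]) ht.2, mul_comm t]

lemma gfun_maps {t : ℝ} (ht : t ∈ Icc (0:ℝ) 1) : gfun t ∈ Icc (0:ℝ) (1 / π) := by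
  have h0 := arccos_nonneg t
  have h1 := arccos_le_pi_div_two.2 ht.1
  have hp := pi_pos
  rw [gfun_eq ht]
  constructor
  · have := aux_lower h0 h1
    have : 0 ≤ 2 / (3 * π) * arccos t ^ 3 := by positivity
    apply div_nonneg (by linarith) hp.le
  · have : 0 ≤ arccos t * cos (arccos t) :=
      mul_nonneg h0 (cos_nonneg_of_mem_Icc ⟨by linarith, h1⟩)
    have := sin_le_one (arccos t)
    gcongr
    linarith

lemma gfun_continuous : Continuous gfun := by
  unfold gfun
  have := continuous_arccos
  fun_prop

lemma gfun_hasDerivAt {t : ℝ} (h0 : 0 ≤ t) (h1 : t < 1) :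
    HasDerivAt gfun (-arccos t / π) t := by
  have hs : 0 < 1 - t ^ 2 := by nlinarith
  have hs' : 0 < √(1 - t ^ 2) := sqrt_pos.2 hs
  have e1 := (((hasDerivAt_pow 2 t).const_sub 1).sqrt hs.ne')
  have e2 := (hasDerivAt_id t).mul (hasDerivAt_arccos (x := t) (by linarith) h1.ne)
  have := (e1.sub e2).div_const π
  refine this.congr_deriv ?_
  have := pi_ne_zero
  simp
  field_simp
  ring

lemma h_continuousOn (h : ℝ → ℝ)
    (h_maps : ∀ y ∈ Set.Icc (0:ℝ) (1 / π), h y ∈ Set.Icc (0:ℝ) 1)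
    (h_right_inv : ∀ y ∈ Set.Icc (0:ℝ) (1 / π), gfun (h y) = y)
    (h_left_inv : ∀ t ∈ Set.Icc (0:ℝ) 1, h (gfun t) = t) :
    ContinuousOn h (Icc 0 (1 / π)) := by
  let e : Icc (0:ℝ) 1 ≃ Icc (0:ℝ) (1 / π) :=
    { toFun := fun t => ⟨gfun t, gfun_maps t.2⟩
      invFun := fun y => ⟨h y, h_maps y y.2⟩
      left_inv := fun t => Subtype.ext (h_left_inv t t.2)
      right_inv := fun y => Subtype.ext (h_right_inv y y.2) }
  have hc : Continuous e := (gfun_continuous.comp continuous_subtype_val).subtype_mk _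
  have := (hc.homeoOfEquivCompactToT2).symm.continuous
  rw [continuousOn_iff_continuous_domRestrict]
  exact continuous_subtype_val.comp this

/-- Passing from powers of `θ` to powers of `y`. -/
lemma transfer (m : ℕ) (e k1 k2 : ℝ) (he : e ≤ 0) (hm : 3 * e = -(m : ℝ))
    (hk1 : 0 < k1) (hk2 : 0 < k2) :
    ∃ c C : ℝ, 0 < c ∧ 0 < C ∧ ∀ y x F : ℝ, 0 < x → 2 / (3 * π ^ 2) * x ^ 3 ≤ y →
      y ≤ 1 / (3 * π) * x ^ 3 → k1 * (x ^ m)⁻¹ ≤ F → F ≤ k2 * (x ^ m)⁻¹ →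
      c * y ^ e ≤ F ∧ F ≤ C * y ^ e := by
  have hp := pi_pos
  have ha : 0 < 2 / (3 * π ^ 2) := by positivity
  have hb : 0 < 1 / (3 * π) := by positivity
  set a := 2 / (3 * π ^ 2)
  set b := 1 / (3 * π)
  have hae : 0 < a ^ e := rpow_pos_of_pos ha _
  have hbe : 0 < b ^ e := rpow_pos_of_pos hb _
  refine ⟨k1 / a ^ e, k2 / b ^ e, by positivity, by positivity, ?_⟩
  intro y x F hx h1 h2 h3 h4
  have hx3 : (x ^ 3) ^ e = (x ^ m)⁻¹ := by
    rw [← rpow_natCast x 3, ← rpow_mul hx.le]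
    push_cast
    rw [hm, rpow_neg hx.le, rpow_natCast]
  have hy : 0 < y := lt_of_lt_of_le (by positivity) h1
  have u1 : y ^ e ≤ a ^ e * (x ^ m)⁻¹ := by
    rw [← hx3, ← mul_rpow ha.le (by positivity)]
    exact rpow_le_rpow_of_nonpos (by positivity) h1 he
  have u2 : b ^ e * (x ^ m)⁻¹ ≤ y ^ e := by
    rw [← hx3, ← mul_rpow hb.le (by positivity)]
    exact rpow_le_rpow_of_nonpos hy h2 he
  constructor
  · calc k1 / a ^ e * y ^ e ≤ k1 / a ^ e * (a ^ e * (x ^ m)⁻¹) := by gcongr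
      _ = k1 * (x ^ m)⁻¹ := by field_simp
      _ ≤ F := h3
  · calc F ≤ k2 * (x ^ m)⁻¹ := h4
      _ = k2 / b ^ e * (b ^ e * (x ^ m)⁻¹) := by field_simp
      _ ≤ k2 / b ^ e * y ^ e := by gcongr

/-- Explicit derivatives. -/
lemma derivs (h : ℝ → ℝ)
    (h_maps : ∀ y ∈ Set.Icc (0:ℝ) (1 / π), h y ∈ Set.Icc (0:ℝ) 1)
    (h_right_inv : ∀ y ∈ Set.Icc (0:ℝ) (1 / π), gfun (h y) = y)
    (h_left_inv : ∀ t ∈ Set.Icc (0:ℝ) 1, h (gfun t) = t) :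
    ∀ y ∈ Ioc (0:ℝ) (1 / π), ∃ x : ℝ, 0 < x ∧ x ≤ π / 2 ∧ y = (sin x - x * cos x) / π ∧
      iteratedDerivWithin 1 h (Icc (0:ℝ) (1 / π)) y = -π / x ∧
      iteratedDerivWithin 2 h (Icc (0:ℝ) (1 / π)) y = π ^ 2 / (x ^ 3 * sin x) ∧
      iteratedDerivWithin 3 h (Icc (0:ℝ) (1 / π)) y =
        -(π ^ 3 * (3 * sin x + x * cos x) / (x ^ 5 * sin x ^ 3)) := by
  have hp := pi_pos
  set S := Icc (0:ℝ) (1 / π) with hS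
  have hsub : Ioc (0:ℝ) (1 / π) ⊆ S := Ioc_subset_Icc_self
  have hU : UniqueDiffOn ℝ S := uniqueDiffOn_Icc (by positivity)
  have hcont := h_continuousOn h h_maps h_right_inv h_left_inv
  have hlt : ∀ y ∈ Ioc (0:ℝ) (1 / π), h y < 1 := by
    intro y hy
    refine lt_of_le_of_ne (h_maps y (hsub hy)).2 fun h1 => ?_
    have := h_right_inv y (hsub hy)
    rw [h1] at this
    simp [gfun] at this
    linarith [hy.1]
  have hxpos : ∀ y ∈ Ioc (0:ℝ) (1 / π), 0 < arccos (h y) := fun y hy => arccos_pos.2 (hlt y hy)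
  have hxle : ∀ y ∈ Ioc (0:ℝ) (1 / π), arccos (h y) ≤ π / 2 :=
    fun y hy => arccos_le_pi_div_two.2 (h_maps y (hsub hy)).1
  have hsin : ∀ y ∈ Ioc (0:ℝ) (1 / π), 0 < sin (arccos (h y)) :=
    fun y hy => sin_pos_of_pos_of_lt_pi (hxpos y hy) (by linarith [hxle y hy])
  have hnhd : ∀ y ∈ Ioc (0:ℝ) (1 / π), Ioc (0:ℝ) (1 / π) ∈ nhdsWithin y S := by
    intro y hy
    filter_upwards [self_mem_nhdsWithin, mem_nhdsWithin_of_mem_nhds (Ioi_mem_nhds hy.1)]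
      with z hz hz'
    exact ⟨hz', hz.2⟩
  have d1 : ∀ y ∈ Ioc (0:ℝ) (1 / π), HasDerivWithinAt h (-π / arccos (h y)) S y := by
    intro y hy
    have hne : -arccos (h y) / π ≠ 0 := by
      have := hxpos y hy
      exact div_ne_zero (by linarith) hp.ne'
    have hg := (gfun_hasDerivAt (h_maps y (hsub hy)).1 (hlt y hy)).hasFDerivAt_equiv hne
    have := (hg.hasFDerivWithinAt (s := univ)).of_local_left_inverse (g := h) (s := S) (a := y)
      (by rw [nhdsWithin_univ]; exact hcont y (hsub hy)) (hsub hy)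
      (by filter_upwards [self_mem_nhdsWithin] with z hz using h_right_inv z hz)
    refine this.hasDerivWithinAt.congr_deriv ?_
    have := (hxpos y hy).ne'
    simp
    field_simp
  have dx : ∀ y ∈ Ioc (0:ℝ) (1 / π), HasDerivWithinAt (fun y => arccos (h y))
      (π / (arccos (h y) * sin (arccos (h y)))) S y := by
    intro y hy
    have := (hasDerivAt_arccos (x := h y) (by linarith [(h_maps y (hsub hy)).1])
      (hlt y hy).ne).comp_hasDerivWithinAt y (d1 y hy)
    refine this.congr_deriv ?_
    rw [← sin_arccos]
    have := (hxpos y hy).ne'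
    have := (hsin y hy).ne'
    field_simp
  have step : ∀ (n : ℕ) (f : ℝ → ℝ) (f' : ℝ),
      (∀ y ∈ Ioc (0:ℝ) (1 / π), iteratedDerivWithin n h S y = f y) →
      ∀ y ∈ Ioc (0:ℝ) (1 / π), HasDerivWithinAt f f' S y →
      iteratedDerivWithin (n + 1) h S y = f' := by
    intro n f f' hf y hy hd
    rw [iteratedDerivWithin_succ]
    refine HasDerivWithinAt.derivWithin ?_ (hU y (hsub hy))
    refine hd.congr_of_eventuallyEq ?_ (hf y hy)
    filter_upwards [hnhd y hy] with z hz using hf z hz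
  have i1 : ∀ y ∈ Ioc (0:ℝ) (1 / π), iteratedDerivWithin 1 h S y = -π / arccos (h y) :=
    fun y hy => step 0 h _ (fun z _ => by simp) y hy (d1 y hy)
  have i2 : ∀ y ∈ Ioc (0:ℝ) (1 / π), iteratedDerivWithin 2 h S y =
      π ^ 2 / (arccos (h y) ^ 3 * sin (arccos (h y))) := by
    intro y hy
    refine step 1 _ _ i1 y hy ?_
    have hx := (hxpos y hy).ne'
    have hs := (hsin y hy).ne'
    refine ((hasDerivWithinAt_const y S (-π)).fun_div (dx y hy) hx).congr_deriv ?_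
    field_simp
    ring
  have i3 : ∀ y ∈ Ioc (0:ℝ) (1 / π), iteratedDerivWithin 3 h S y =
      -(π ^ 3 * (3 * sin (arccos (h y)) + arccos (h y) * cos (arccos (h y))) /
        (arccos (h y) ^ 5 * sin (arccos (h y)) ^ 3)) := by
    intro y hy
    refine step 2 _ _ i2 y hy ?_
    have hx := (hxpos y hy).ne'
    have hs := (hsin y hy).ne'
    refine ((hasDerivWithinAt_const y S (π ^ 2)).fun_div
      (((dx y hy).fun_pow 3).fun_mul (dx y hy).sin) (by positivity)).congr_deriv ?_
    generalize arccos (h y) = x at *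
    push_cast
    field_simp
    ring
  intro y hy
  refine ⟨arccos (h y), hxpos y hy, hxle y hy, ?_, i1 y hy, i2 y hy, i3 y hy⟩
  rw [← gfun_eq (h_maps y (hsub hy)), h_right_inv y (hsub hy)]

/-- the derivatives of the inverse function `h = g⁻¹ : [0, 1/π] → [0, 1]`
satisfy `|h^{(j)}(y)| ≍ y^{2/3 - j}` for `y ∈ (0, 1/π]` and `j = 1, 2, 3`. -/
theorem inverse_gfun_deriv_bounds (h : ℝ → ℝ)
    (h_maps : ∀ y ∈ Set.Icc (0:ℝ) (1 / π), h y ∈ Set.Icc (0:ℝ) 1)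
    (h_right_inv : ∀ y ∈ Set.Icc (0:ℝ) (1 / π), gfun (h y) = y)
    (h_left_inv : ∀ t ∈ Set.Icc (0:ℝ) 1, h (gfun t) = t) :
    ∃ c C : ℝ, 0 < c ∧ c < C ∧ ∀ y ∈ Set.Ioc (0:ℝ) (1 / π), ∀ j : ℕ,
      (j = 1 ∨ j = 2 ∨ j = 3) →
      c * y ^ ((2 : ℝ) / 3 - (j : ℝ)) ≤
          |iteratedDerivWithin j h (Set.Icc (0:ℝ) (1 / π)) y| ∧
        |iteratedDerivWithin j h (Set.Icc (0:ℝ) (1 / π)) y| ≤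
          C * y ^ ((2 : ℝ) / 3 - (j : ℝ)) := by
  have hp := pi_pos
  obtain ⟨c1, C1, hc1, hC1, t1⟩ := transfer 1 (2 / 3 - ((1 : ℕ) : ℝ)) π π
    (by norm_num) (by norm_num) hp hp
  obtain ⟨c2, C2, hc2, hC2, t2⟩ := transfer 4 (2 / 3 - ((2 : ℕ) : ℝ)) (π ^ 2) (π ^ 3 / 2)
    (by norm_num) (by norm_num) (by positivity) (by positivity)
  obtain ⟨c3, C3, hc3, hC3, t3⟩ := transfer 7 (2 / 3 - ((3 : ℕ) : ℝ)) (6 * π ^ 2) (π ^ 6 / 2)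
    (by norm_num) (by norm_num) (by positivity) (by positivity)
  refine ⟨min c1 (min c2 c3), max C1 (max C2 C3) + min c1 (min c2 c3), by positivity, ?_, ?_⟩
  · have : 0 < max C1 (max C2 C3) := lt_max_of_lt_left hC1
    linarith
  have hmin : 0 < min c1 (min c2 c3) := by positivity
  have m1 : min c1 (min c2 c3) ≤ c1 := min_le_left _ _
  have m2 : min c1 (min c2 c3) ≤ c2 := (min_le_right _ _).trans (min_le_left _ _)
  have m3 : min c1 (min c2 c3) ≤ c3 := (min_le_right _ _).trans (min_le_right _ _)
  have M1 : C1 ≤ max C1 (max C2 C3) + min c1 (min c2 c3) := by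
    have : C1 ≤ max C1 (max C2 C3) := le_max_left _ _
    linarith
  have M2 : C2 ≤ max C1 (max C2 C3) + min c1 (min c2 c3) := by
    have : C2 ≤ max C1 (max C2 C3) := (le_max_left _ _).trans (le_max_right _ _)
    linarith
  have M3 : C3 ≤ max C1 (max C2 C3) + min c1 (min c2 c3) := by
    have : C3 ≤ max C1 (max C2 C3) := (le_max_right _ _).trans (le_max_right _ _)
    linarith
  generalize min c1 (min c2 c3) = c at *
  generalize max C1 (max C2 C3) + c = C at *
  intro y hy j hj
  obtain ⟨x, hx, hx2, hyx, e1, e2, e3⟩ := derivs h h_maps h_right_inv h_left_inv y hy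
  have b1 : 2 / (3 * π ^ 2) * x ^ 3 ≤ y := by
    rw [hyx, le_div_iff₀ hp]
    refine le_trans (le_of_eq ?_) (aux_lower hx.le hx2)
    field_simp
  have b2 : y ≤ 1 / (3 * π) * x ^ 3 := by
    rw [hyx, div_le_iff₀ hp]
    refine (aux_upper hx.le).trans (le_of_eq ?_)
    field_simp
  have s1 : 2 / π * x ≤ sin x := mul_le_sin hx.le hx2
  have s2 : sin x ≤ x := sin_le hx.le
  have s0 : 0 < sin x := lt_of_lt_of_le (by positivity) s1
  have k0 : 0 ≤ cos x := cos_nonneg_of_mem_Icc ⟨by linarith, hx2⟩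
  have k1 : cos x ≤ 1 := cos_le_one x
  have hye : ∀ e : ℝ, 0 ≤ y ^ e := fun e => rpow_nonneg hy.1.le e
  rcases hj with rfl | rfl | rfl
  · rw [e1]
    have hF : |-π / x| = π * (x ^ 1)⁻¹ := by
      rw [abs_div, abs_neg, abs_of_pos hp, abs_of_pos hx, pow_one, div_eq_mul_inv]
    obtain ⟨u, v⟩ := t1 y x |-π / x| hx b1 b2 hF.ge hF.le
    exact ⟨(mul_le_mul_of_nonneg_right m1 (hye _)).trans u,
      v.trans (mul_le_mul_of_nonneg_right M1 (hye _))⟩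
  · rw [e2, abs_of_pos (by positivity)]
    obtain ⟨u, v⟩ := t2 y x (π ^ 2 / (x ^ 3 * sin x)) hx b1 b2
      (by
        calc π ^ 2 * (x ^ 4)⁻¹ = π ^ 2 / (x ^ 3 * x) := by field_simp
          _ ≤ π ^ 2 / (x ^ 3 * sin x) := by gcongr)
      (by
        calc π ^ 2 / (x ^ 3 * sin x) ≤ π ^ 2 / (x ^ 3 * (2 / π * x)) := by gcongr
          _ = π ^ 3 / 2 * (x ^ 4)⁻¹ := by field_simp)
    exact ⟨(mul_le_mul_of_nonneg_right m2 (hye _)).trans u,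
      v.trans (mul_le_mul_of_nonneg_right M2 (hye _))⟩
  · rw [e3, abs_neg, abs_of_pos (by positivity)]
    obtain ⟨u, v⟩ := t3 y x (π ^ 3 * (3 * sin x + x * cos x) / (x ^ 5 * sin x ^ 3)) hx b1 b2
      (by
        calc 6 * π ^ 2 * (x ^ 7)⁻¹ = π ^ 3 * (3 * (2 / π * x) + x * 0) / (x ^ 5 * x ^ 3) := by
              field_simp
              ring
          _ ≤ _ := by gcongr)
      (by
        calc π ^ 3 * (3 * sin x + x * cos x) / (x ^ 5 * sin x ^ 3)
            ≤ π ^ 3 * (3 * x + x * 1) / (x ^ 5 * (2 / π * x) ^ 3) := by gcongr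
          _ = π ^ 6 / 2 * (x ^ 7)⁻¹ := by
              field_simp
              ring)
    exact ⟨(mul_le_mul_of_nonneg_right m3 (hye _)).trans u,
      v.trans (mul_le_mul_of_nonneg_right M3 (hye _))⟩
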